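/- arXiv:2205.04664 — 2 statements merged into one kernel-verified Lean document; each statement's English description precedes it below -/
import Mathlib

section
/- Let T = {L_1,…,L_r} be an r-set with ⋃_{i=1}^r L_i = {1,…,n} and ⋂_{i=1}^r L_i = ∅, and let r' be an integer with 0 ≤ r' < r. If there exist n − k − r' translations t_1,…,t_{n−k−r'} ∈ ⋂_{i=1}^r D_{L_i} whose K_T-vector sets are weakly linearly independent, then dim_ℂ (⋂_{i=1}^r D_{L_i}) ≥ n − r' > n − r; in particular, the codimension in ℂ^n of the intersection of the r discriminantal hyperplanes D_{L_1},…,D_{L_r} is strictly smaller than r. -/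
open Matrix

/-- `Dsub k n α L` is the set of translations `t ∈ ℂⁿ` such that the affine hyperplanes
`H_i^{t_i} = {x : α_i ⬝ x = t_i}`, `i ∈ L`, have a common point. -/
def Dsub (k n : ℕ) (α : Fin n → Fin k → ℂ) (L : Finset (Fin n)) : Set (Fin n → ℂ) :=
  {t | ∃ p : Fin k → ℂ, ∀ i ∈ L, α i ⬝ᵥ p = t i}

/-!
Translating the whole central arrangement by a vector `x` gives the translation `(α_i · x)_i`, for
which every `P_L` is `x`; these form a `k`-dimensional subspace `U` of `⋂ D_{L_i}`. If a linear
combination `∑ a_h t_h` lies in `U`, then linearity and uniqueness of the points `P_L` make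
`∑ a_h P_{L_j}(t_h)` the same for all `j`, that is, `∑ a_h v_{i₀,j}(t_h) = 0`. So translations with
weakly linearly independent `K_T`-vector sets are linearly independent modulo `U`, and `d` of them
force `dim ⋂ D_{L_i} ≥ k + d`.
-/

open Module Submodule

section LinearAlgebra

lemma finrank_add_card_le_of_linearIndependent_mkQ {K V η : Type*} [DivisionRing K]
    [AddCommGroup V] [Module K V] [Fintype η] {U W : Submodule K V} [FiniteDimensional K W]
    (hUW : U ≤ W) {v : η → V} (hvW : ∀ h, v h ∈ W) (hv : LinearIndependent K (U.mkQ ∘ v)) :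
    finrank K U + Fintype.card η ≤ finrank K W := by
  have : FiniteDimensional K U := finiteDimensional_of_le hUW
  have hli := (finBasis K U).linearIndependent.sumElim_of_quotient v hv
  have hspan : span K (Set.range (Sum.elim (fun i => (finBasis K U i : V)) v)) ≤ W := by
    rw [span_le, Set.range_subset_iff]
    rintro (i | h)
    exacts [hUW (finBasis K U i).2, hvW h]
  simpa [finrank_span_eq_card hli] using finrank_mono hspan

lemma span_image_eq_top_of_finrank_le_card {K V ι : Type*} [DivisionRing K] [AddCommGroup V]
    [Module K V] [FiniteDimensional K V] {v : ι → V}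
    (hv : ∀ S : Finset ι, S.card = finrank K V → LinearIndependent K (fun i : S => v i))
    {s : Finset ι} (hs : finrank K V ≤ s.card) : span K (v '' s) = ⊤ := by
  obtain ⟨S, hSs, hS⟩ := Finset.exists_subset_card_eq hs
  have hspan : span K (Set.range fun i : S => v i) = ⊤ :=
    (hv S hS).span_eq_top_of_card_eq_finrank' (by simp [hS])
  refine eq_top_mono (span_mono ?_) hspan
  rintro _ ⟨i, rfl⟩
  exact Set.mem_image_of_mem v (hSs i.2)

lemma eq_of_dual_apply_eq_of_span_image_eq_top {K E ι : Type*} [Field K] [AddCommGroup E]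
    [Module K E] {α : ι → Dual K E} {s : Set ι} (hs : span K (α '' s) = ⊤) {p q : E}
    (hpq : ∀ i ∈ s, α i p = α i q) : p = q := by
  have hle : span K (α '' s) ≤ LinearMap.ker (Dual.eval K E (p - q)) := by
    rw [span_le, Set.image_subset_iff]
    exact fun i hi => by simp [hpq i hi]
  rw [← sub_eq_zero, ← forall_dual_apply_eq_zero_iff K]
  exact fun φ => hle (hs ▸ mem_top)

end LinearAlgebra

section KTVectorSet

variable {K E κ η : Type*} [AddCommGroup E]

/-- The `K_T`-vector set `(v_{i₀,j})_{j ≠ i₀}` of a translation whose points `P_{L_j}` are `P j`.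
Families of `K_T`-vector sets are weakly linearly independent exactly when they are linearly
independent in the product space `{j // j ≠ i₀} → E`. -/
def kTVectorSet (P : κ → E) (i₀ : κ) : {j // j ≠ i₀} → E := fun j => P j - P i₀

lemma linearIndependent_kTVectorSet_iff [Ring K] [Module K E] [Fintype η] {P : η → κ → E}
    {i₀ : κ} :
    LinearIndependent K (fun h => kTVectorSet (P h) i₀) ↔
      ∀ a : η → K, (∀ j, j ≠ i₀ → ∑ h, a h • (P h j - P h i₀) = 0) → ∀ h, a h = 0 := by
  simp [Fintype.linearIndependent_iff, funext_iff, kTVectorSet]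

end KTVectorSet

section ConcurrentTranslations

variable {K E ι : Type*} [CommSemiring K] [AddCommMonoid E] [Module K E]

/-- The space `D_s` of translations `t` for which the affine hyperplanes `{x | α i x = t i}`,
`i ∈ s`, have a common point. -/
def concurrentTranslations (α : ι → Dual K E) (s : Set ι) : Submodule K (ι → K) where
  carrier := {t | ∃ p, ∀ i ∈ s, α i p = t i}
  zero_mem' := ⟨0, by simp⟩
  add_mem' := by
    rintro t u ⟨p, hp⟩ ⟨q, hq⟩
    exact ⟨p + q, fun i hi => by simp [hp i hi, hq i hi]⟩
  smul_mem' := by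
    rintro c t ⟨p, hp⟩
    exact ⟨c • p, fun i hi => by simp [hp i hi]⟩

lemma range_pi_le_concurrentTranslations (α : ι → Dual K E) (s : Set ι) :
    LinearMap.range (LinearMap.pi α) ≤ concurrentTranslations α s := by
  rintro _ ⟨x, rfl⟩
  exact ⟨x, fun _ _ => rfl⟩

end ConcurrentTranslations

section DimensionBound

variable {K E ι κ η : Type*} [Field K] [AddCommGroup E] [Module K E]

lemma linearIndependent_mkQ_of_kTVectorSet {α : ι → Dual K E} {L : κ → Set ι}
    (hL : ∀ j, span K (α '' L j) = ⊤) {t : η → ι → K} {P : η → κ → E}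
    (hP : ∀ h j, ∀ i ∈ L j, α i (P h j) = t h i) {i₀ : κ}
    (hwli : LinearIndependent K fun h => kTVectorSet (P h) i₀) :
    LinearIndependent K ((LinearMap.range (LinearMap.pi α)).mkQ ∘ t) := by
  rw [linearIndependent_iff']
  intro S a ha
  have hmem : ∑ h ∈ S, a h • t h ∈ LinearMap.range (LinearMap.pi α) := by
    rw [← Quotient.mk_eq_zero, ← mkQ_apply]
    simpa only [map_sum, map_smul, Function.comp_apply] using ha
  obtain ⟨x, hx⟩ := hmem
  have hpoint (j : κ) : ∑ h ∈ S, a h • P h j = x := by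
    refine eq_of_dual_apply_eq_of_span_image_eq_top (hL j) fun i hi => ?_
    calc α i (∑ h ∈ S, a h • P h j) = ∑ h ∈ S, a h * t h i := by simp [hP _ j i hi]
      _ = (∑ h ∈ S, a h • t h) i := by simp
      _ = α i x := by rw [← hx, LinearMap.pi_apply]
  refine linearIndependent_iff'.1 hwli S a (funext fun j => ?_)
  simp [kTVectorSet, smul_sub, hpoint]

theorem stmt_10_general [Finite ι] [Fintype η] {α : ι → Dual K E} {L : κ → Set ι}
    (hL : ∀ j, span K (α '' L j) = ⊤) {t : η → ι → K} {P : η → κ → E}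
    (hP : ∀ h j, ∀ i ∈ L j, α i (P h j) = t h i) {i₀ : κ}
    (hwli : LinearIndependent K fun h => kTVectorSet (P h) i₀) :
    finrank K E + Fintype.card η ≤ finrank K (⨅ j, concurrentTranslations α (L j) :) := by
  have hinj : Function.Injective (LinearMap.pi α) := fun x y hxy =>
    eq_of_dual_apply_eq_of_span_image_eq_top (hL i₀) fun i _ => congrFun hxy i
  rw [← LinearMap.finrank_range_of_inj hinj]
  exact finrank_add_card_le_of_linearIndependent_mkQ
    (le_iInf fun j => range_pi_le_concurrentTranslations α (L j))
    (fun h => (mem_iInf _).2 fun j => ⟨P h j, hP h j⟩)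
    (linearIndependent_mkQ_of_kTVectorSet hL hP hwli)

end DimensionBound

lemma coe_iInf_concurrentTranslations_dotProductEquiv {k n : ℕ} {κ : Sort*}
    (α : Fin n → Fin k → ℂ) (L : κ → Finset (Fin n)) :
    ((⨅ j, concurrentTranslations (dotProductEquiv ℂ (Fin k) ∘ α) (L j) :
      Submodule ℂ (Fin n → ℂ)) : Set (Fin n → ℂ)) = ⋂ j, Dsub k n α (L j) :=
  coe_iInf _

lemma span_dotProductEquiv_image_eq_top {K m ι : Type*} [Field K] [Fintype m] [DecidableEq m]
    {α : ι → m → K}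
    (hα : ∀ S : Finset ι, S.card = Fintype.card m → LinearIndependent K (fun i : S => α i))
    {s : Finset ι} (hs : Fintype.card m ≤ s.card) :
    span K ((dotProductEquiv K m ∘ α) '' s) = ⊤ := by
  rw [← finrank_fintype_fun_eq_card K] at hα hs
  rw [Set.image_comp, ← LinearEquiv.coe_coe, ← map_span,
    span_image_eq_top_of_finrank_le_card hα hs, Submodule.map_top, LinearEquiv.range]

/-- If an `r`-set `T` with `⋃ L_i = [n]` and `⋂ L_i = ∅` admits `n - k - r'` translations
with weakly linearly independent `K_T`-vector sets (`r' < r`), then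
`dim (⋂ D_{L_i}) ≥ n - r' > n - r`, i.e. the codimension of the intersection of the `r`
discriminantal hyperplanes is strictly smaller than `r`.  Here `P h i` represents the
(unique) point `P_{L_i}(t_h)`, so `v_{i₀,j}(t_h) = P h j - P h i₀`. -/
theorem stmt_10 (k n : ℕ) (hk : 0 < k) (hkn : k < n)
    (α : Fin n → Fin k → ℂ)
    (hgen : ∀ S : Finset (Fin n), S.card = k →
      LinearIndependent ℂ (fun i : S => α i.1))
    (r : ℕ) (L : Fin r → Finset (Fin n))
    (hcard : ∀ i, (L i).card = k + 1)
    (hpair : ∀ i j, i ≠ j → (L i ∩ L j).Nonempty)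
    (hrset : ∀ I : Finset (Fin r), I.card = r - 1 →
      I.biUnion L = Finset.univ.biUnion L)
    (hunion : Finset.univ.biUnion L = Finset.univ)
    (hinter : (Finset.univ.inf L : Finset (Fin n)) = ∅)
    (r' : ℕ) (hr' : r' < r)
    (i₀ : Fin r)
    (t : Fin (n - k - r') → Fin n → ℂ)
    (ht : ∀ h, t h ∈ ⋂ i : Fin r, Dsub k n α (L i))
    (P : Fin (n - k - r') → Fin r → Fin k → ℂ)
    (hP : ∀ (h : Fin (n - k - r')) (i : Fin r), ∀ p ∈ L i, α p ⬝ᵥ P h i = t h p)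
    (hwli : ∀ a : Fin (n - k - r') → ℂ,
      (∀ j : Fin r, j ≠ i₀ → ∑ h, a h • (P h j - P h i₀) = 0) →
      ∀ h, a h = 0) :
    ∃ W : Submodule ℂ (Fin n → ℂ),
      (W : Set (Fin n → ℂ)) = ⋂ i : Fin r, Dsub k n α (L i) ∧
      n - r' ≤ Module.finrank ℂ W ∧ n - r < Module.finrank ℂ W := by
  have hL (j) : span ℂ ((dotProductEquiv ℂ (Fin k) ∘ α) '' L j) = ⊤ :=
    span_dotProductEquiv_image_eq_top (by simpa using hgen) (by simp [hcard])
  have hdim := stmt_10_general hL hP (linearIndependent_kTVectorSet_iff.2 hwli)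
  rw [finrank_fin_fun, Fintype.card_fin] at hdim
  exact ⟨_, coe_iInf_concurrentTranslations_dotProductEquiv α L, by omega, by omega⟩
end

section
/- Let k = 11, n = 16, and let α_1,…,α_16 ∈ ℂ^{11} be as listed in the context. Let L_1 = {1,…,16} \ {13,14,15,16}, L_2 = {1,…,16} \ {9,10,11,12}, L_3 = {1,…,16} \ {5,6,7,8}, L_4 = {1,…,16} \ {1,2,3,4}. Then the subspace D_{L_1} ∩ D_{L_2} ∩ D_{L_3} ∩ D_{L_4} of ℂ^{16} has dimension at least 13; in particular the intersection of the four discriminantal hyperplanes D_{L_1},…,D_{L_4} has codimension at most 3, strictly smaller than its multiplicity 4. -/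
/-!
Moving a common point through all sixteen hyperplanes gives an 11-dimensional space of translations,
the column space of the matrix of normals. Two more directions come from a coincidence among the
columns: on the last four rows columns 0, 1, 2 agree, and on the first twelve rows each of them
vanishes on the two blocks of four that belong to its `L_j`. So the translation which is zero on the
first twelve hyperplanes and agrees with column 0 on the last four is realised on `L_1` by the
origin, and on `L_2`, `L_3`, `L_4` by the points `e₀`, `e₁`, `e₂`. The same holds for columns
3, 4, 5. Since the first twelve normals span `ℂ¹¹`, no nonzero vector of the column space vanishes
on the first twelve indices, so the dimensions 11 and 2 add up.
-/

open Matrix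

/-- The normals of the arrangement of 16 hyperplanes in `ℂ¹¹` of Example `B(16,11,A⁰)`. -/
def alpha16 : Fin 16 → Fin 11 → ℂ :=
  ![![0, 0, 1, 0, 0, 1, 0, 0, 0, 1, -1],
    ![0, 0, -1, 0, 0, 1, 1, 1, 1, -1, 0],
    ![0, 0, 2, 0, 0, 1, 1, 0, 1, 1, 0],
    ![0, 0, 1, 0, 0, 1, 1, 0, 0, 0, 1],
    ![0, -1, 0, 0, 1, 0, 1, 1, 1, -1, 0],
    ![0, 1, 0, 0, 2, 0, 0, -1, -1, 0, 1],
    ![0, 2, 0, 0, -1, 0, -1, 0, 0, 1, 1],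
    ![0, -1, 0, 0, 2, 0, 1, 1, 1, 0, 0],
    ![1, 0, 0, -3, 0, 0, -1, -1, 1, 1, 1],
    ![2, 0, 0, 5, 0, 0, 1, -1, -1, 1, 1],
    ![3, 0, 0, 1, 0, 0, 1, -1, 2, 0, 1],
    ![1, 0, 0, 5, 0, 0, 1, 0, 1, 1, 0],
    ![1, 1, 1, -3, -3, -3, -1, -3, 2, -2, -1],
    ![1, 1, 1, 0, 0, 0, -2, 1, -8, 1, 1],
    ![0, 0, 0, -5, -5, -5, 1, 2, -3, -4, 7],
    ![1, 1, 1, -2, -2, -2, 5, 6, 7, 8, 9]]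

/-- `Dsub16 L` is the set of translations `t ∈ ℂ¹⁶` such that the affine hyperplanes
`H_i^{t_i} = {x ∈ ℂ¹¹ : α_i ⬝ x = t_i}`, `i ∈ L`, have a common point. -/
def Dsub16 (L : Finset (Fin 16)) : Set (Fin 16 → ℂ) :=
  {t | ∃ p : Fin 11 → ℂ, ∀ i ∈ L, alpha16 i ⬝ᵥ p = t i}

section DiscriminantalSubspace

variable {ι n K : Type*} [Fintype n]

/-- The space `D_L` of those translations `t` for which the affine hyperplanes `A i ⬝ᵥ x = t i`,
`i ∈ L`, have a common point; the normals are the rows of `A`. -/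
def discriminantalSubspace [CommSemiring K] (A : Matrix ι n K) (L : Set ι) :
    Submodule K (ι → K) where
  carrier := {t | ∃ p : n → K, ∀ i ∈ L, A i ⬝ᵥ p = t i}
  zero_mem' := ⟨0, fun i _ => dotProduct_zero (A i)⟩
  add_mem' := by
    rintro s t ⟨p, hp⟩ ⟨q, hq⟩
    exact ⟨p + q, fun i hi => by rw [dotProduct_add, hp i hi, hq i hi, Pi.add_apply]⟩
  smul_mem' := by
    rintro c t ⟨p, hp⟩
    exact ⟨c • p, fun i hi => by rw [dotProduct_smul, hp i hi, Pi.smul_apply]⟩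

lemma range_mulVecLin_le_discriminantalSubspace [CommSemiring K] (A : Matrix ι n K) (L : Set ι) :
    LinearMap.range A.mulVecLin ≤ discriminantalSubspace A L := by
  rintro _ ⟨p, rfl⟩
  exact ⟨p, fun _ _ => rfl⟩

lemma mem_discriminantalSubspace_of_eqOn_zero [CommSemiring K] (A : Matrix ι n K) {L : Set ι}
    {t : ι → K} (h : Set.EqOn t 0 L) : t ∈ discriminantalSubspace A L :=
  ⟨0, fun i hi => by rw [dotProduct_zero, h hi, Pi.zero_apply]⟩

lemma mem_discriminantalSubspace_of_forall_eq_col [CommSemiring K] {A : Matrix ι n K} {L : Set ι}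
    {t : ι → K} (c : n) (h : ∀ i ∈ L, A i c = t i) : t ∈ discriminantalSubspace A L := by
  classical
  exact ⟨Pi.single c 1, fun i hi => by rw [dotProduct_single_one, h i hi]⟩

lemma disjoint_range_mulVecLin_pi_bot [CommSemiring K] {A : Matrix ι n K} {S : Set ι}
    (hS : ∀ p, (∀ i ∈ S, A i ⬝ᵥ p = 0) → p = 0) :
    Disjoint (LinearMap.range A.mulVecLin) (Submodule.pi S fun _ => ⊥) := by
  rw [Submodule.disjoint_def]
  rintro _ ⟨p, rfl⟩ hp
  rw [hS p hp, map_zero]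

lemma finrank_range_mulVecLin_of_separating [CommRing K] [Nontrivial K]
    {A : Matrix ι n K} {S : Set ι}
    (hS : ∀ p, (∀ i ∈ S, A i ⬝ᵥ p = 0) → p = 0) :
    Module.finrank K (LinearMap.range A.mulVecLin) = Fintype.card n := by
  have injective : Function.Injective A.mulVecLin :=
    (injective_iff_map_eq_zero _).2 fun p hp => hS p fun i _ => congrFun hp i
  rw [LinearMap.finrank_range_of_inj injective, Module.finrank_fintype_fun_eq_card]

theorem card_add_card_le_finrank_of_separating {κ : Type*} [Finite ι] [Fintype κ] [Field K]
    {A : Matrix ι n K} {S : Set ι} (hS : ∀ p, (∀ i ∈ S, A i ⬝ᵥ p = 0) → p = 0)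
    {W : Submodule K (ι → K)} (hA : LinearMap.range A.mulVecLin ≤ W)
    {s : κ → ι → K} (hs : LinearIndependent K s) (hsS : ∀ k, Set.EqOn (s k) 0 S)
    (hsW : ∀ k, s k ∈ W) :
    Fintype.card n + Fintype.card κ ≤ Module.finrank K W := by
  let U := Submodule.span K (Set.range s)
  have hUS : U ≤ Submodule.pi S fun _ => ⊥ :=
    Submodule.span_le.2 <| Set.range_subset_iff.2 fun k _ hi => hsS k hi
  have hUW : U ≤ W := Submodule.span_le.2 <| Set.range_subset_iff.2 hsW
  have disjoint : Disjoint (LinearMap.range A.mulVecLin) U :=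
    (disjoint_range_mulVecLin_pi_bot hS).mono_right hUS
  calc Fintype.card n + Fintype.card κ
      = Module.finrank K (LinearMap.range A.mulVecLin) + Module.finrank K U := by
        rw [finrank_range_mulVecLin_of_separating hS, finrank_span_eq_card hs]
    _ = Module.finrank K ↥(LinearMap.range A.mulVecLin ⊔ U) := by
        rw [← Submodule.finrank_sup_add_finrank_inf_eq, disjoint.eq_bot, finrank_bot, add_zero]
    _ ≤ Module.finrank K W := Submodule.finrank_mono (sup_le hA hUW)

end DiscriminantalSubspace

lemma eq_zero_of_alpha16_dotProduct_eq_zero (p : Fin 11 → ℂ)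
    (hp : ∀ i ∈ Set.Iio 12, alpha16 i ⬝ᵥ p = 0) : p = 0 := by
  have row (i : Fin 16) (hi : i < 12) :
      alpha16 i 0 * p 0 + alpha16 i 1 * p 1 + alpha16 i 2 * p 2 + alpha16 i 3 * p 3 +
        alpha16 i 4 * p 4 + alpha16 i 5 * p 5 + alpha16 i 6 * p 6 + alpha16 i 7 * p 7 +
        alpha16 i 8 * p 8 + alpha16 i 9 * p 9 + alpha16 i 10 * p 10 = 0 := by
    simpa [dotProduct, Fin.sum_univ_succ, add_assoc] using hp i hi
  have h0 := row 0 (by decide)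
  have h1 := row 1 (by decide)
  have h2 := row 2 (by decide)
  have h3 := row 3 (by decide)
  have h4 := row 4 (by decide)
  have h5 := row 5 (by decide)
  have h6 := row 6 (by decide)
  have h7 := row 7 (by decide)
  have h8 := row 8 (by decide)
  have h9 := row 9 (by decide)
  have h11 := row 11 (by decide)
  simp only [alpha16, cons_val] at h0 h1 h2 h3 h4 h5 h6 h7 h8 h9 h11
  -- The first two blocks of four rows make the coordinates 6, 7, 8, 10 multiples of `p 9`,
  -- and the third block then forces `p 9 = 0`.
  have p_ten : p 10 = -3 * p 9 := by linear_combination h3 - h0 - 4 * h4 - h5 + 3 * h7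
  have p_six : p 6 = 7 * p 9 := by linear_combination h3 - h0 - 2 * p_ten
  have p_seven_add_p_eight : p 7 + p 8 = -p 9 := by
    linear_combination (3 * h4 + h6 - h7 - p_six - p_ten) / 2
  have p_eight : p 8 = -9 / 2 * p 9 := by
    linear_combination (h1 + 2 * h2 - 3 * h3 - p_seven_add_p_eight + 3 * p_ten) / 2
  have p_seven : p 7 = 7 / 2 * p 9 := by linear_combination p_seven_add_p_eight - p_eight
  have p_nine : p 9 = 0 := by
    linear_combination (2 / 189) * (5 * (h11 - h8) + 8 * (h9 - 2 * h11) - 2 * p_six +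
      3 * p_seven + 24 * p_eight - 3 * p_ten)
  ext j
  fin_cases j <;> simp <;> grind

/-- The index sets `L_1, …, L_4`, as `indexSet 0, …, indexSet 3`; each one omits one of the four
blocks of four consecutive indices. -/
def indexSet : Fin 4 → Finset (Fin 16) :=
  ![{0, 1, 2, 3, 4, 5, 6, 7, 8, 9, 10, 11},
    {0, 1, 2, 3, 4, 5, 6, 7, 12, 13, 14, 15},
    {0, 1, 2, 3, 8, 9, 10, 11, 12, 13, 14, 15},
    {4, 5, 6, 7, 8, 9, 10, 11, 12, 13, 14, 15}]

/-- The translation that moves the last four hyperplanes as the basis vector `e_c` does and fixes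
the first twelve. -/
def lastBlockTranslation (c : Fin 11) (i : Fin 16) : ℂ :=
  if i < 12 then 0 else alpha16 i c

lemma lastBlockTranslation_eqOn_zero (c : Fin 11) :
    Set.EqOn (lastBlockTranslation c) 0 (Set.Iio 12) :=
  fun _ hi => if_pos hi

lemma linearIndependent_lastBlockTranslation :
    LinearIndependent ℂ ![lastBlockTranslation 0, lastBlockTranslation 3] := by
  rw [LinearIndependent.pair_iff]
  intro a b h
  have ha : a = 0 := by simpa [lastBlockTranslation, alpha16] using congrFun h 13
  have hb : b = 0 := by simpa [lastBlockTranslation, alpha16] using congrFun h 14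
  exact ⟨ha, hb⟩

lemma lastBlockTranslation_mem_iInf_discriminantalSubspace {c : Fin 11} (hc : c = 0 ∨ c = 3) :
    lastBlockTranslation c ∈ ⨅ j, discriminantalSubspace alpha16 (indexSet j : Set (Fin 16)) := by
  have indexSet_zero : ↑(indexSet 0) ⊆ Set.Iio (12 : Fin 16) := by
    simp [indexSet, Set.insert_subset_iff]
  rw [Submodule.mem_iInf, Fin.forall_fin_succ, Fin.forall_fin_succ, Fin.forall_fin_two]
  refine ⟨mem_discriminantalSubspace_of_eqOn_zero _
      ((lastBlockTranslation_eqOn_zero c).mono indexSet_zero),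
    mem_discriminantalSubspace_of_forall_eq_col c ?_,
    mem_discriminantalSubspace_of_forall_eq_col (c + 1) ?_,
    mem_discriminantalSubspace_of_forall_eq_col (c + 2) ?_⟩
  all_goals
    rcases hc with rfl | rfl <;> simp [indexSet, lastBlockTranslation, alpha16]

lemma coe_iInf_discriminantalSubspace_indexSet :
    ((⨅ j, discriminantalSubspace alpha16 (indexSet j : Set (Fin 16)) : Submodule ℂ _) : Set _) =
      Dsub16 (indexSet 0) ∩ Dsub16 (indexSet 1) ∩ Dsub16 (indexSet 2) ∩ Dsub16 (indexSet 3) := by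
  ext t
  simp only [SetLike.mem_coe, Submodule.mem_iInf, Fin.forall_fin_succ, Fin.forall_fin_zero,
    Set.mem_inter_iff, and_assoc, and_true]
  rfl

/-- For `L_1 = [16] \ {13,14,15,16}`, `L_2 = [16] \ {9,10,11,12}`,
`L_3 = [16] \ {5,6,7,8}`, `L_4 = [16] \ {1,2,3,4}` (written below with 0-based indices),
the intersection `D_{L_1} ∩ D_{L_2} ∩ D_{L_3} ∩ D_{L_4}` has dimension at least 13, i.e.
codimension at most 3, strictly smaller than its multiplicity 4. -/
theorem stmt_15 :
    ∃ W : Submodule ℂ (Fin 16 → ℂ),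
      (W : Set (Fin 16 → ℂ)) =
        Dsub16 {0, 1, 2, 3, 4, 5, 6, 7, 8, 9, 10, 11} ∩
        Dsub16 {0, 1, 2, 3, 4, 5, 6, 7, 12, 13, 14, 15} ∩
        Dsub16 {0, 1, 2, 3, 8, 9, 10, 11, 12, 13, 14, 15} ∩
        Dsub16 {4, 5, 6, 7, 8, 9, 10, 11, 12, 13, 14, 15} ∧
      13 ≤ Module.finrank ℂ W := by
  refine ⟨⨅ j, discriminantalSubspace alpha16 (indexSet j),
    coe_iInf_discriminantalSubspace_indexSet, ?_⟩
  have columns_le := le_iInf fun j =>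
    range_mulVecLin_le_discriminantalSubspace alpha16 (indexSet j : Set (Fin 16))
  simpa using card_add_card_le_finrank_of_separating eq_zero_of_alpha16_dotProduct_eq_zero
    columns_le linearIndependent_lastBlockTranslation
    (Fin.forall_fin_two.2 ⟨lastBlockTranslation_eqOn_zero 0, lastBlockTranslation_eqOn_zero 3⟩)
    (Fin.forall_fin_two.2 ⟨lastBlockTranslation_mem_iInf_discriminantalSubspace (.inl rfl),
      lastBlockTranslation_mem_iInf_discriminantalSubspace (.inr rfl)⟩)
end
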